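/- Let m ≥ 1, let u_0 ≤ v_0, …, u_{m−1} ≤ v_{m−1} be integers with Σ_{i=0}^{m−1} u_i ≤ n ≤ Σ_{i=0}^{m−1} v_i for an integer n, and let T = (t_0, …, t_{m−1}) be integers with t_0 + … + t_{m−1} < n − m + 1. Then there exists a sequence of integers B = (b_0, …, b_{m−1}) with u_i ≤ b_i ≤ v_i for every i and b_0 + … + b_{m−1} ≤ n, such that for every index i ∈ {0, …, m−1} there exists l' with 1 ≤ l' ≤ m for which Σ_{j=0}^{l'−1} b_{(i+j) mod m} > (l' − 1) + Σ_{j=0}^{l'−1} t_{(i+j) mod m}. -/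

import Mathlib

/-!
Redistribute the total `n` over the boxes: as `n` lies between the sum of the lower bounds and the
sum of the upper bounds, some admissible sequence `b` has sum exactly `n`. A chain of length `m` is
the whole ring wherever it starts, so its sum is `n`, which exceeds `m - 1 + ∑ T`.
-/

open Finset

open scoped Pointwise

theorem sum_range_add_mod {M : Type*} [AddCommMonoid M] (f : ℕ → M) (m i : ℕ) :
    ∑ j ∈ range m, f ((i + j) % m) = ∑ j ∈ range m, f j := by
  calc ∑ j ∈ range m, f ((i + j) % m)
      = ∑ k ∈ Ico i (i + m), f (k % m) := by rw [sum_Ico_eq_sum_range, Nat.add_sub_cancel_left]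
    _ = ∑ k ∈ (Ico i (i + m)).image (· % m), f k := (sum_image (Nat.mod_injOn_Ico i m)).symm
    _ = ∑ j ∈ range m, f j := by rw [Nat.image_Ico_mod]

theorem sum_Icc_eq_Icc_sum {ι M : Type*} [AddCommMonoid M] [LinearOrder M]
    [IsOrderedCancelAddMonoid M] [ExistsAddOfLE M] {s : Finset ι} {u v : ι → M}
    (huv : ∀ i ∈ s, u i ≤ v i) :
    ∑ i ∈ s, Set.Icc (u i) (v i) = Set.Icc (∑ i ∈ s, u i) (∑ i ∈ s, v i) := by
  classical
  induction s using Finset.induction_on with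
  | empty => simp only [sum_empty, Set.Icc_self, Set.singleton_zero]
  | insert a s ha ih =>
    obtain ⟨huva, huvs⟩ := (forall_mem_insert ..).1 huv
    rw [sum_insert ha, sum_insert ha, sum_insert ha, ih huvs,
      Set.Icc_add_Icc huva (sum_le_sum huvs)]

theorem pigeonring_integer_reduction_tight_general {R : Type*} [AddCommGroupWithOne R]
    [LinearOrder R] [IsOrderedAddMonoid R] (m : ℕ) (u v t : ℕ → R) (n : R)
    (huv : ∀ i < m, u i ≤ v i)
    (hu : ∑ i ∈ range m, u i ≤ n)
    (hv : n ≤ ∑ i ∈ range m, v i)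
    (ht : ∑ i ∈ range m, t i < n - m + 1) :
    ∃ b : ℕ → R, (∀ i < m, u i ≤ b i ∧ b i ≤ v i) ∧ ∑ i ∈ range m, b i = n ∧
      ∀ i, ((m : R) - 1) + ∑ j ∈ range m, t ((i + j) % m) <
        ∑ j ∈ range m, b ((i + j) % m) := by
  have hn : n ∈ ∑ i ∈ range m, Set.Icc (u i) (v i) := by
    rw [sum_Icc_eq_Icc_sum fun i hi => huv i (mem_range.1 hi)]
    exact ⟨hu, hv⟩
  obtain ⟨b, hb, hsum⟩ := (Set.mem_finsetSum ..).1 hn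
  refine ⟨b, fun i hi => hb (mem_range.2 hi), hsum, fun i => ?_⟩
  rw [sum_range_add_mod, sum_range_add_mod, hsum, ← lt_sub_iff_add_lt', ← sub_add]
  exact ht

/-- Tightness of the integer-reduction pigeonring principle: if the (integer) boxes range over
integer intervals `[u i, v i]` with `∑ u ≤ n ≤ ∑ v`, then for any integer threshold sequence
`T` with `∑ T < n - m + 1` there is an admissible box sequence `B` with `∑ B ≤ n` such that no
chain starting anywhere has all prefixes within the integer-reduction bound. -/
theorem pigeonring_integer_reduction_tight (m : ℕ) (hm : 1 ≤ m) (u v t : ℕ → ℤ) (n : ℤ)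
    (huv : ∀ i < m, u i ≤ v i)
    (hu : ∑ i ∈ Finset.range m, u i ≤ n)
    (hv : n ≤ ∑ i ∈ Finset.range m, v i)
    (ht : ∑ i ∈ Finset.range m, t i < n - m + 1) :
    ∃ b : ℕ → ℤ, (∀ i < m, u i ≤ b i ∧ b i ≤ v i) ∧
      (∑ i ∈ Finset.range m, b i ≤ n) ∧
      ∀ i < m, ∃ l', 1 ≤ l' ∧ l' ≤ m ∧
        ((l' : ℤ) - 1) + ∑ j ∈ Finset.range l', t ((i + j) % m) <
          ∑ j ∈ Finset.range l', b ((i + j) % m) := by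
  obtain ⟨b, hb, hsum, hchain⟩ := pigeonring_integer_reduction_tight_general m u v t n huv hu hv ht
  exact ⟨b, hb, hsum.le, fun i _ => ⟨m, hm, le_rfl, hchain i⟩⟩
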